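/- Projection of λπ-reductions to λσ: suppose Γ ⊢ M reduces to Σ ⊢ L by zero or more steps of the λπ-judgement reduction ⇝, (Γ ⊢ M) ⟹ U, and (Σ ⊢ L) ⟹ V. Then σ(U) λσ-reduces to σ(V) in zero or more steps, where σ(W) denotes the (unique) σ-normal form of a name-free term W. -/

import Mathlib

/- Named terms and substitutions of the λπ-calculus. Variables are natural numbers. -/
mutual
inductive Tm : Type
  | var : ℕ → Tm
  | app : Tm → Tm → Tm
  | lam : ℕ → Tm → Tm
  | clos : Subst → Tm → Tm
inductive Subst : Type
  | id : Subst
  | pi : ℕ → Subst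
  | cons : Subst → Tm → ℕ → Subst
  | comp : Subst → Subst → Subst
end

/- Contexts are lists of variables; the head of the list is the *rightmost* variable,
so the context `Γ, a` of the paper is `a :: Γ`. -/
mutual
/-- `WfTm Γ M` is the judgement `Γ ⊢ M`. -/
inductive WfTm : List ℕ → Tm → Prop
  | var (Γ : List ℕ) (a : ℕ) : WfTm (a :: Γ) (.var a)
  | weak {Γ : List ℕ} {a : ℕ} (b : ℕ) : a ≠ b → WfTm Γ (.var a) → WfTm (b :: Γ) (.var a)
  | app {Γ M N} : WfTm Γ M → WfTm Γ N → WfTm Γ (.app M N)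
  | lam {Γ a M} : WfTm (a :: Γ) M → WfTm Γ (.lam a M)
  | clos {Γ s Δ M} : WfSub Γ s Δ → WfTm Δ M → WfTm Γ (.clos s M)
/-- `WfSub Γ s Δ` is the judgement `Γ ⊢ s ▷ Δ`. -/
inductive WfSub : List ℕ → Subst → List ℕ → Prop
  | id (Γ) : WfSub Γ .id Γ
  | pi (Γ a) : WfSub (a :: Γ) (.pi a) Γ
  | cons {Γ s Δ N} (a) : WfSub Γ s Δ → WfTm Γ N → WfSub Γ (.cons s N a) (a :: Δ)
  | comp {Γ s Δ q Θ} : WfSub Γ s Δ → WfSub Δ q Θ → WfSub Γ (.comp s q) Θ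
end

/-- The operator `O_{λa}` on sequences of finite sets (sequences are 0-indexed:
index `n` corresponds to the paper's index `n+1`). -/
def Olam (a : ℕ) (A : ℕ → Finset ℕ) : ℕ → Finset ℕ
  | 0 => (A 0).erase a ∪ A 1
  | n + 1 => A (n + 2)

/-- The operator `O_π`. -/
def Opi (A : ℕ → Finset ℕ) : ℕ → Finset ℕ
  | 0 => ∅
  | n + 1 => A n

mutual
/-- The free-variable sequence of a term: `FV M n` is the paper's `FV_{n+1}(M)`. -/
def FV : Tm → ℕ → Finset ℕ
  | .var a => fun n => if n = 0 then {a} else ∅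
  | .app M N => fun n => FV M n ∪ FV N n
  | .lam a M => Olam a (FV M)
  | .clos s M => Osub s (FV M)
/-- The operator `O_s` associated with a substitution `s`. -/
def Osub : Subst → (ℕ → Finset ℕ) → (ℕ → Finset ℕ)
  | .id => fun A => A
  | .pi _ => fun A => Opi A
  | .cons s N a => fun A n => Osub s (Olam a A) n ∪ FV N n
  | .comp s q => fun A => Osub s (Osub q A)
end

/-- Iterated abstraction `λΓ.M` (recall the head of the list is the rightmost variable). -/
def lamCtx : List ℕ → Tm → Tm
  | [], M => M
  | a :: Γ, M => lamCtx Γ (.lam a M)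

/-- Free variables of a judgement: `FV(Γ ⊢ M) = FV(λΓ.M)`. -/
def FVJ (Γ : List ℕ) (M : Tm) : ℕ → Finset ℕ := FV (lamCtx Γ M)

/-- Iterated lifting `⇑_Δ(s)`. -/
def Uparrow : List ℕ → Subst → Subst
  | [], s => s
  | a :: Δ, s => .cons (.comp (.pi a) (Uparrow Δ s)) (.var a) a

/- One-step reduction of the λπ-calculus (compatible closure).  The Boolean
parameter tells whether the rule `Beta` is allowed: `StepTm true` is λπ-reduction,
`StepTm false` is σπα-reduction. -/
mutual
inductive StepTm : Bool → Tm → Tm → Prop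
  | beta {a : ℕ} {M N : Tm} :
      StepTm true (.app (.lam a M) N) (.clos (.cons .id N a) M)
  | abs {β : Bool} {s : Subst} {a : ℕ} {M : Tm} :
      StepTm β (.clos s (.lam a M))
        (.lam a (.clos (.cons (.comp (.pi a) s) (.var a) a) M))
  | app {β : Bool} {s : Subst} {M N : Tm} :
      StepTm β (.clos s (.app M N)) (.app (.clos s M) (.clos s N))
  | consVar {β : Bool} {s : Subst} {N : Tm} {a : ℕ} :
      StepTm β (.clos (.cons s N a) (.var a)) N
  | new {β : Bool} {s : Subst} {N : Tm} {a b : ℕ} : a ≠ b →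
      StepTm β (.clos (.cons s N a) (.var b)) (.clos s (.var b))
  | idVar {β : Bool} {a : ℕ} : StepTm β (.clos .id (.var a)) (.var a)
  | clos {β : Bool} {s q : Subst} {M : Tm} :
      StepTm β (.clos s (.clos q M)) (.clos (.comp s q) M)
  | pi1 {β : Bool} {a b : ℕ} : a ≠ b → StepTm β (.clos (.pi a) (.var b)) (.var b)
  | pi2 {β : Bool} {s : Subst} {a b : ℕ} : a ≠ b →
      StepTm β (.clos (.comp s (.pi a)) (.var b)) (.clos s (.var b))
  | alpha1 {β : Bool} {a b : ℕ} {M : Tm} :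
      (∃ i, a ∈ FV (.lam a M) i) → (∀ i, b ∉ FV (.lam a M) i) →
      StepTm β (.lam a M) (.lam b (.clos (.cons (.pi b) (.var b) a) M))
  | lamCong {β : Bool} {a : ℕ} {M₁ M₂ : Tm} :
      StepTm β M₁ M₂ → StepTm β (.lam a M₁) (.lam a M₂)
  | appL {β : Bool} {M₁ M₂ N : Tm} : StepTm β M₁ M₂ → StepTm β (.app M₁ N) (.app M₂ N)
  | appR {β : Bool} {M N₁ N₂ : Tm} : StepTm β N₁ N₂ → StepTm β (.app M N₁) (.app M N₂)
  | closL {β : Bool} {s₁ s₂ : Subst} {M : Tm} :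
      StepSub β s₁ s₂ → StepTm β (.clos s₁ M) (.clos s₂ M)
  | closR {β : Bool} {s : Subst} {M₁ M₂ : Tm} :
      StepTm β M₁ M₂ → StepTm β (.clos s M₁) (.clos s M₂)
inductive StepSub : Bool → Subst → Subst → Prop
  | ass {β : Bool} {s q r : Subst} :
      StepSub β (.comp s (.comp q r)) (.comp (.comp s q) r)
  | idR {β : Bool} {s : Subst} : StepSub β (.comp s .id) s
  | idShift {β : Bool} {a : ℕ} : StepSub β (.comp .id (.pi a)) (.pi a)
  | consShift {β : Bool} {s : Subst} {N : Tm} {a : ℕ} :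
      StepSub β (.comp (.cons s N a) (.pi a)) s
  | map {β : Bool} {s q : Subst} {N : Tm} {a : ℕ} :
      StepSub β (.comp s (.cons q N a)) (.cons (.comp s q) (.clos s N) a)
  | consL {β : Bool} {s₁ s₂ : Subst} {N : Tm} {a : ℕ} :
      StepSub β s₁ s₂ → StepSub β (.cons s₁ N a) (.cons s₂ N a)
  | consR {β : Bool} {s : Subst} {N₁ N₂ : Tm} {a : ℕ} :
      StepTm β N₁ N₂ → StepSub β (.cons s N₁ a) (.cons s N₂ a)
  | compL {β : Bool} {s₁ s₂ q : Subst} :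
      StepSub β s₁ s₂ → StepSub β (.comp s₁ q) (.comp s₂ q)
  | compR {β : Bool} {s q₁ q₂ : Subst} :
      StepSub β q₁ q₂ → StepSub β (.comp s q₁) (.comp s q₂)
end

/-- One-step reduction `⇝` on judgements `Γ ⊢ M`, including the rule `α₂`.
`StepJ true` is λπ, `StepJ false` is σπα. -/
inductive StepJ (β : Bool) : List ℕ × Tm → List ℕ × Tm → Prop
  | step {Γ : List ℕ} {M₁ M₂ : Tm} : StepTm β M₁ M₂ → StepJ β (Γ, M₁) (Γ, M₂)
  | alpha2 {Γ Δ : List ℕ} {a b : ℕ} {M : Tm} :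
      (∃ i, a ∈ FVJ (Δ ++ [a]) M i) → (∀ i, b ∉ FVJ (Δ ++ [a]) M i) →
      StepJ β (Δ ++ a :: Γ, M)
        (Δ ++ b :: Γ, .clos (Uparrow Δ (.cons (.pi b) (.var b) a)) M)

/- Name-free (de Bruijn) terms and substitutions. -/
mutual
inductive NTm : Type
  | one : NTm
  | app : NTm → NTm → NTm
  | lam : NTm → NTm
  | clos : NSub → NTm → NTm
inductive NSub : Type
  | id : NSub
  | pi : NSub
  | cons : NSub → NTm → NSub
  | comp : NSub → NSub → NSub
end

/-- `piIter n` is the left-nested composition of `n+1` copies of `π`. -/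
def piIter : ℕ → NSub
  | 0 => .pi
  | k + 1 => .comp (piIter k) .pi

/-- `dbr n` is the de Bruijn index `n+1̲`: `dbr 0 = 1` and
`dbr (n+1) = ((…(π∘π)∘…)∘π)∘1` with `n+1` occurrences of `π`. -/
def dbr : ℕ → NTm
  | 0 => .one
  | n + 1 => .clos (piIter n) .one

/- One-step reduction of λσ (`NStepTm true`) resp. σ (`NStepTm false`)
on name-free terms/substitutions. -/
mutual
inductive NStepTm : Bool → NTm → NTm → Prop
  | beta {U V : NTm} : NStepTm true (.app (.lam U) V) (.clos (.cons .id V) U)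
  | abs {β : Bool} {u : NSub} {U : NTm} :
      NStepTm β (.clos u (.lam U)) (.lam (.clos (.cons (.comp .pi u) .one) U))
  | app {β : Bool} {u : NSub} {U V : NTm} :
      NStepTm β (.clos u (.app U V)) (.app (.clos u U) (.clos u V))
  | consVar {β : Bool} {u : NSub} {V : NTm} : NStepTm β (.clos (.cons u V) .one) V
  | idVar {β : Bool} : NStepTm β (.clos .id .one) .one
  | clos {β : Bool} {u v : NSub} {U : NTm} :
      NStepTm β (.clos u (.clos v U)) (.clos (.comp u v) U)
  | lamCong {β : Bool} {U₁ U₂ : NTm} : NStepTm β U₁ U₂ → NStepTm β (.lam U₁) (.lam U₂)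
  | appL {β : Bool} {U₁ U₂ V : NTm} : NStepTm β U₁ U₂ → NStepTm β (.app U₁ V) (.app U₂ V)
  | appR {β : Bool} {U V₁ V₂ : NTm} : NStepTm β V₁ V₂ → NStepTm β (.app U V₁) (.app U V₂)
  | closL {β : Bool} {u₁ u₂ : NSub} {U : NTm} :
      NStepSub β u₁ u₂ → NStepTm β (.clos u₁ U) (.clos u₂ U)
  | closR {β : Bool} {u : NSub} {U₁ U₂ : NTm} :
      NStepTm β U₁ U₂ → NStepTm β (.clos u U₁) (.clos u U₂)
inductive NStepSub : Bool → NSub → NSub → Prop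
  | ass {β : Bool} {u v w : NSub} : NStepSub β (.comp u (.comp v w)) (.comp (.comp u v) w)
  | idR {β : Bool} {u : NSub} : NStepSub β (.comp u .id) u
  | idShift {β : Bool} : NStepSub β (.comp .id .pi) .pi
  | consShift {β : Bool} {u : NSub} {V : NTm} : NStepSub β (.comp (.cons u V) .pi) u
  | map {β : Bool} {u v : NSub} {V : NTm} :
      NStepSub β (.comp u (.cons v V)) (.cons (.comp u v) (.clos u V))
  | consL {β : Bool} {u₁ u₂ : NSub} {V : NTm} :
      NStepSub β u₁ u₂ → NStepSub β (.cons u₁ V) (.cons u₂ V)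
  | consR {β : Bool} {u : NSub} {V₁ V₂ : NTm} :
      NStepTm β V₁ V₂ → NStepSub β (.cons u V₁) (.cons u V₂)
  | compL {β : Bool} {u₁ u₂ v : NSub} :
      NStepSub β u₁ u₂ → NStepSub β (.comp u₁ v) (.comp u₂ v)
  | compR {β : Bool} {u v₁ v₂ : NSub} :
      NStepSub β v₁ v₂ → NStepSub β (.comp u v₁) (.comp u v₂)
end

/- The correspondence `(Γ ⊢ M) ⟹ U` resp. `(Γ ⊢ s ▷ Δ) ⟹ u` between judgements and
name-free terms/substitutions (Definition 7.6 of the paper). -/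
mutual
inductive TrTm : List ℕ → Tm → NTm → Prop
  | var (Γ : List ℕ) (a : ℕ) : TrTm (a :: Γ) (.var a) (dbr 0)
  | weak {Γ : List ℕ} {a : ℕ} {n : ℕ} (b : ℕ) : a ≠ b →
      TrTm Γ (.var a) (dbr n) → TrTm (b :: Γ) (.var a) (dbr (n + 1))
  | app {Γ M N U V} : TrTm Γ M U → TrTm Γ N V → TrTm Γ (.app M N) (.app U V)
  | lam {Γ a M U} : TrTm (a :: Γ) M U → TrTm Γ (.lam a M) (.lam U)
  | clos {Γ s Δ M u U} : TrSub Γ s Δ u → TrTm Δ M U → TrTm Γ (.clos s M) (.clos u U)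
inductive TrSub : List ℕ → Subst → List ℕ → NSub → Prop
  | id (Γ) : TrSub Γ .id Γ .id
  | pi (Γ a) : TrSub (a :: Γ) (.pi a) Γ .pi
  | cons {Γ s Δ N u V} (a) : TrSub Γ s Δ u → TrTm Γ N V →
      TrSub Γ (.cons s N a) (a :: Δ) (.cons u V)
  | comp {Γ s Δ q Θ u v} : TrSub Γ s Δ u → TrSub Δ q Θ v →
      TrSub Γ (.comp s q) Θ (.comp u v)
end


theorem liftR {α β : Type} {p : α → α → Prop} {q : β → β → Prop} (f : α → β)
    (h : ∀ a b, p a b → q (f a) (f b)) {a b : α} (hab : Relation.ReflTransGen p a b) :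
    Relation.ReflTransGen q (f a) (f b) := by
  induction hab with
  | refl => exact .refl
  | tail _ h' ih => exact ih.tail (h _ _ h')

/-! ### Pure de Bruijn terms -/

inductive La : Type
  | var : ℕ → La
  | app : La → La → La
  | lam : La → La

namespace La

def upr (f : ℕ → ℕ) : ℕ → ℕ
  | 0 => 0
  | n + 1 => f n + 1

def ren : (ℕ → ℕ) → La → La
  | f, .var n => .var (f n)
  | f, .app s t => .app (ren f s) (ren f t)
  | f, .lam t => .lam (ren (upr f) t)

def up (s : ℕ → La) : ℕ → La
  | 0 => .var 0
  | n + 1 => ren Nat.succ (s n)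

def sub : (ℕ → La) → La → La
  | s, .var n => s n
  | s, .app t u => .app (sub s t) (sub s u)
  | s, .lam t => .lam (sub (up s) t)

def cons (s : ℕ → La) (t : La) : ℕ → La
  | 0 => t
  | n + 1 => s n

theorem ren_eq (t : La) : ∀ f, ren f t = sub (fun n => .var (f n)) t := by
  induction t with
  | var n => intro f; rfl
  | app s t h1 h2 => intro f; simp [ren, sub, h1, h2]
  | lam t h =>
    intro f
    simp only [ren, sub, h]
    congr 2
    funext n; cases n <;> rfl

theorem sub_ren (t : La) : ∀ f s, sub s (ren f t) = sub (fun n => s (f n)) t := by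
  induction t with
  | var n => intro f s; rfl
  | app s t h1 h2 => intro f; simp [ren, sub, h1, h2]
  | lam t h =>
    intro f s
    simp only [ren, sub, h]
    congr 2
    funext n; cases n <;> rfl

theorem ren_ren (t : La) (f g) : ren f (ren g t) = ren (fun n => f (g n)) t := by
  rw [ren_eq, sub_ren, ren_eq]

theorem ren_sub (t : La) : ∀ f s, ren f (sub s t) = sub (fun n => ren f (s n)) t := by
  induction t with
  | var n => intro f s; rfl
  | app s t h1 h2 => intro f; simp [ren, sub, h1, h2]
  | lam t h =>
    intro f s
    simp only [ren, sub, h]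
    congr 2
    funext n
    cases n with
    | zero => rfl
    | succ n => simp only [up, ren_ren]; rfl

theorem sub_sub (t : La) : ∀ s r, sub s (sub r t) = sub (fun n => sub s (r n)) t := by
  induction t with
  | var n => intro f s; rfl
  | app s t h1 h2 => intro f; simp [sub, h1, h2]
  | lam t h =>
    intro f s
    simp only [sub, h]
    congr 2
    funext n
    cases n with
    | zero => rfl
    | succ n => simp only [up, sub_ren, ren_sub]

theorem up_var : up (fun n => .var n) = fun n => .var n := by
  funext n; cases n <;> rfl

theorem sub_var (t : La) : sub (fun n => .var n) t = t := by
  induction t with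
  | var n => rfl
  | app s t h1 h2 => simp [sub, h1, h2]
  | lam t h => simp [sub, up_var, h]

inductive Beta : La → La → Prop
  | beta (t u) : Beta (.app (.lam t) u) (sub (cons .var u) t)
  | lam {t t'} : Beta t t' → Beta (.lam t) (.lam t')
  | appL {t t' u} : Beta t t' → Beta (.app t u) (.app t' u)
  | appR {t u u'} : Beta u u' → Beta (.app t u) (.app t u')

abbrev Betas := Relation.ReflTransGen Beta

theorem Betas.lam {t t'} (h : Betas t t') : Betas (.lam t) (.lam t') :=
  liftR La.lam (fun _ _ => Beta.lam) h

theorem Betas.app {t t' u u'} (h : Betas t t') (h' : Betas u u') :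
    Betas (.app t u) (.app t' u') :=
  (liftR (fun x => La.app x u) (fun _ _ => Beta.appL) h).trans
    (liftR (fun x => La.app t' x) (fun _ _ => Beta.appR) h')

theorem Beta.sub {t t'} (h : Beta t t') : ∀ s, Beta (La.sub s t) (La.sub s t') := by
  induction h with
  | beta t u =>
    intro s
    have := Beta.beta (La.sub (up s) t) (La.sub s u)
    have e : La.sub (cons .var (La.sub s u)) (La.sub (up s) t)
        = La.sub s (La.sub (cons .var u) t) := by
      rw [sub_sub, sub_sub]
      congr 1
      funext n
      cases n with
      | zero => rfl
      | succ n =>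
        simp only [up, sub_ren, cons, La.sub]
        exact sub_var _
    rw [e] at this
    exact this
  | lam _ ih => intro s; exact Beta.lam (ih _)
  | appL _ ih => intro s; exact Beta.appL (ih _)
  | appR _ ih => intro s; exact Beta.appR (ih _)

theorem Betas.sub {t t'} (h : Betas t t') (s) : Betas (La.sub s t) (La.sub s t') :=
  liftR (La.sub s) (fun _ _ h => Beta.sub h s) h

theorem Betas.ren {t t'} (h : Betas t t') (f) : Betas (La.ren f t) (La.ren f t') := by
  rw [ren_eq, ren_eq]; exact h.sub _

theorem Betas.sub' (t : La) : ∀ {s r : ℕ → La}, (∀ n, Betas (s n) (r n)) →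
    Betas (La.sub s t) (La.sub r t) := by
  induction t with
  | var n => intro s r h; exact h n
  | app a b h1 h2 => intro s r h; exact Betas.app (h1 h) (h2 h)
  | lam t ih =>
    intro s r h
    refine Betas.lam (ih ?_)
    intro n
    cases n with
    | zero => exact .refl
    | succ n => exact (h n).ren _

end La

open La (Betas)

/-! ### Semantics of name-free terms -/

mutual
def semT : NTm → La
  | .one => .var 0
  | .app U V => .app (semT U) (semT V)
  | .lam U => .lam (semT U)
  | .clos u U => La.sub (semS u) (semT U)
def semS : NSub → ℕ → La
  | .id => fun n => .var n
  | .pi => fun n => .var (n + 1)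
  | .cons u V => La.cons (semS u) (semT V)
  | .comp u v => fun n => La.sub (semS u) (semS v n)
end

theorem semS_up (u : NSub) : semS (.cons (.comp .pi u) .one) = La.up (semS u) := by
  funext n
  cases n with
  | zero => rfl
  | succ n => simp only [semS, La.cons, La.up, La.ren_eq]

theorem semS_piIter (n k : ℕ) : semS (piIter n) k = .var (k + n + 1) := by
  induction n generalizing k with
  | zero => rfl
  | succ n ih => simp only [piIter, semS, La.sub, ih]; congr 1; omega

theorem semT_dbr (n : ℕ) : semT (dbr n) = .var n := by
  cases n with
  | zero => rfl
  | succ n => simp [dbr, semT, La.sub, semS_piIter]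

mutual
theorem sem_stepT : ∀ {b U V}, NStepTm b U V → b = false → semT U = semT V
  | _, _, _, .beta, h => by cases h
  | _, _, _, .abs, _ => by simp only [semT, La.sub, semS_up]
  | _, _, _, .app, _ => by simp only [semT, La.sub]
  | _, _, _, .consVar, _ => by simp only [semT, La.sub, semS, La.cons]
  | _, _, _, .idVar, _ => by simp only [semT, La.sub, semS]
  | _, _, _, .clos, _ => by simp only [semT, semS, La.sub_sub]
  | _, _, _, .lamCong h, e => by simp only [semT, sem_stepT h e]
  | _, _, _, .appL h, e => by simp only [semT, sem_stepT h e]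
  | _, _, _, .appR h, e => by simp only [semT, sem_stepT h e]
  | _, _, _, .closL h, e => by simp only [semT, sem_stepS h e]
  | _, _, _, .closR h, e => by simp only [semT, sem_stepT h e]
theorem sem_stepS : ∀ {b u v}, NStepSub b u v → b = false → semS u = semS v
  | _, _, _, .ass, _ => by simp only [semS, La.sub_sub]
  | _, _, _, .idR, _ => by simp only [semS, La.sub]
  | _, _, _, .idShift, _ => by simp only [semS, La.sub]
  | _, _, _, .consShift, _ => by simp only [semS, La.sub, La.cons]
  | _, _, _, .map, _ => by
      funext n; cases n <;> simp only [semS, La.cons, semT]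
  | _, _, _, .consL h, e => by simp only [semS, sem_stepS h e]
  | _, _, _, .consR h, e => by simp only [semS, sem_stepT h e]
  | _, _, _, .compL h, e => by simp only [semS, sem_stepS h e]
  | _, _, _, .compR h, e => by simp only [semS, sem_stepS h e]
end

abbrev RT := Relation.ReflTransGen (NStepTm false)
abbrev RS := Relation.ReflTransGen (NStepSub false)

theorem sem_RT {U V} (h : RT U V) : semT U = semT V := by
  induction h with
  | refl => rfl
  | tail _ h ih => exact ih.trans (sem_stepT h rfl)

theorem RT.lam {U V} (h : RT U V) : RT (.lam U) (.lam V) :=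
  liftR NTm.lam (fun _ _ => NStepTm.lamCong) h
theorem RT.app {U V U' V'} (h : RT U V) (h' : RT U' V') : RT (.app U U') (.app V V') :=
  (liftR (fun x => NTm.app x U') (fun _ _ => NStepTm.appL) h).trans
    (liftR (fun x => NTm.app V x) (fun _ _ => NStepTm.appR) h')
theorem RT.clos {u v U V} (h : RS u v) (h' : RT U V) : RT (.clos u U) (.clos v V) :=
  (liftR (fun x => NTm.clos x U) (fun _ _ => NStepTm.closL) h).trans
    (liftR (fun x => NTm.clos v x) (fun _ _ => NStepTm.closR) h')
theorem RS.cons {u v U V} (h : RS u v) (h' : RT U V) : RS (.cons u U) (.cons v V) :=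
  (liftR (fun x => NSub.cons x U) (fun _ _ => NStepSub.consL) h).trans
    (liftR (fun x => NSub.cons v x) (fun _ _ => NStepSub.consR) h')
theorem RS.comp {u v u' v'} (h : RS u v) (h' : RS u' v') : RS (.comp u u') (.comp v v') :=
  (liftR (fun x => NSub.comp x u') (fun _ _ => NStepSub.compL) h).trans
    (liftR (fun x => NSub.comp v x) (fun _ _ => NStepSub.compR) h')

theorem RT.one {U V} (h : NStepTm false U V) : RT U V := .single h
theorem RS.one {U V} (h : NStepSub false U V) : RS U V := .single h

/-! ### Weak normalization of σ -/

def emb : La → NTm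
  | .var n => dbr n
  | .app s t => .app (emb s) (emb t)
  | .lam t => .lam (emb t)

theorem semT_emb (t : La) : semT (emb t) = t := by
  induction t with
  | var n => exact semT_dbr n
  | app s t h1 h2 => simp [emb, semT, h1, h2]
  | lam t h => simp [emb, semT, h]

/-- normal substitutions; `r = true` restricts to renamings -/
inductive NS (r : Bool) : NSub → Prop
  | id : NS r .id
  | pi (n) : NS r (piIter n)
  | cons {u t} : NS r u → (r = true → ∃ n, t = .var n) → NS r (.cons u (emb t))

def iter (u : NSub) : ℕ → NSub
  | 0 => u
  | n + 1 => .comp (iter u n) .pi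

theorem comp_piIter (u : NSub) (n : ℕ) : RS (.comp u (piIter n)) (iter u (n + 1)) := by
  induction n with
  | zero => exact .refl
  | succ n ih =>
    exact (RS.one .ass).trans (RS.comp ih .refl)

theorem clos_dbr (u : NSub) (n : ℕ) : RT (.clos u (dbr n)) (.clos (iter u n) .one) := by
  cases n with
  | zero => exact .refl
  | succ n => exact (RT.one .clos).trans (RT.clos (comp_piIter u n) .refl)

theorem iter_id (n : ℕ) : RS (iter .id (n + 1)) (piIter n) := by
  induction n with
  | zero => exact RS.one .idShift
  | succ n ih => exact RS.comp ih .refl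

theorem iter_piIter (m n : ℕ) : iter (piIter m) n = piIter (m + n) := by
  induction n with
  | zero => rfl
  | succ n ih => simp only [iter, ih]; rfl

theorem iter_cons (u V) (n : ℕ) : RS (iter (.cons u V) (n + 1)) (iter u n) := by
  induction n with
  | zero => exact RS.one .consShift
  | succ n ih => exact RS.comp ih .refl

theorem NS.iter {r u} (h : NS r u) : ∀ n, ∃ v, NS r v ∧ RS (iter u n) v := by
  induction h with
  | id =>
    intro n
    cases n with
    | zero => exact ⟨_, .id, .refl⟩
    | succ n => exact ⟨_, .pi n, iter_id n⟩
  | pi m =>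
    intro n
    exact ⟨_, .pi (m + n), by rw [iter_piIter]⟩
  | @cons u t hu ht ih =>
    intro n
    cases n with
    | zero => exact ⟨_, .cons hu ht, .refl⟩
    | succ n =>
      obtain ⟨v, hv, h⟩ := ih n
      exact ⟨v, hv, (iter_cons _ _ n).trans h⟩

theorem NS.one {r u} (h : NS r u) :
    ∃ t, RT (.clos u .one) (emb t) ∧ (r = true → ∃ n, t = .var n) := by
  cases h with
  | id => exact ⟨.var 0, RT.one .idVar, fun _ => ⟨_, rfl⟩⟩
  | pi n => exact ⟨.var (n + 1), .refl, fun _ => ⟨_, rfl⟩⟩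
  | cons hu ht => exact ⟨_, RT.one .consVar, ht⟩

theorem NS.dbr {r u} (h : NS r u) (n : ℕ) :
    ∃ t, RT (.clos u (dbr n)) (emb t) ∧ (r = true → ∃ n, t = .var n) := by
  obtain ⟨v, hv, h1⟩ := h.iter n
  obtain ⟨t, ht, h2⟩ := hv.one
  exact ⟨t, (clos_dbr u n).trans ((RT.clos h1 .refl).trans ht), h2⟩

/-- substitution lemma relative to lifting -/
theorem NS.clos {r : Bool} (H : ∀ u, NS r u → ∃ v, NS r v ∧ RS (.comp .pi u) v) (t : La) :
    ∀ u, NS r u → ∃ t', RT (.clos u (emb t)) (emb t') := by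
  induction t with
  | var n => intro u hu; obtain ⟨t, h, _⟩ := hu.dbr n; exact ⟨t, h⟩
  | app a b h1 h2 =>
    intro u hu
    obtain ⟨a', ha⟩ := h1 u hu
    obtain ⟨b', hb⟩ := h2 u hu
    exact ⟨.app a' b', (RT.one .app).trans (RT.app ha hb)⟩
  | lam t ih =>
    intro u hu
    obtain ⟨v, hv, h⟩ := H u hu
    obtain ⟨t', ht⟩ := ih _ (NS.cons (t := .var 0) hv fun _ => ⟨0, rfl⟩)
    exact ⟨.lam t', (RT.one .abs).trans
      (RT.lam ((RT.clos (RS.cons h .refl) .refl).trans ht))⟩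

theorem NS.comp {r : Bool} {u} (hu : NS r u)
    (H : ∀ t, (r = true → ∃ n, t = La.var n) →
      ∃ t', RT (.clos u (emb t)) (emb t') ∧ (r = true → ∃ n, t' = La.var n)) {v} (hv : NS r v) :
    ∃ w, NS r w ∧ RS (.comp u v) w := by
  induction hv with
  | id => exact ⟨u, hu, RS.one .idR⟩
  | pi n =>
    obtain ⟨w, hw, h⟩ := hu.iter (n + 1)
    exact ⟨w, hw, (comp_piIter u n).trans h⟩
  | cons hq ht ih =>
    obtain ⟨w, hw, h⟩ := ih
    obtain ⟨t', h', ht'⟩ := H _ ht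
    exact ⟨_, .cons hw ht', (RS.one .map).trans (RS.cons h h')⟩

theorem NS.pi_true (u) (h : NS true u) : ∃ v, NS true v ∧ RS (.comp .pi u) v := by
  refine NS.comp (NS.pi 0) ?_ h
  intro t ht
  obtain ⟨n, rfl⟩ := ht rfl
  exact (NS.pi 0 : NS true (piIter 0)).dbr n

theorem NS.pi_false (u) (h : NS false u) : ∃ v, NS false v ∧ RS (.comp .pi u) v := by
  refine NS.comp (NS.pi 0) ?_ h
  intro t _
  obtain ⟨t', h⟩ := NS.clos NS.pi_true t (piIter 0) (NS.pi 0)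
  exact ⟨t', h, by simp⟩

mutual
theorem wnT : ∀ U : NTm, ∃ t, RT U (emb t)
  | .one => ⟨.var 0, .refl⟩
  | .app U V => by
      obtain ⟨a, ha⟩ := wnT U
      obtain ⟨b, hb⟩ := wnT V
      exact ⟨.app a b, RT.app ha hb⟩
  | .lam U => by
      obtain ⟨a, ha⟩ := wnT U
      exact ⟨.lam a, RT.lam ha⟩
  | .clos u U => by
      obtain ⟨a, ha⟩ := wnT U
      obtain ⟨v, hv, h⟩ := wnS u
      obtain ⟨t, ht⟩ := NS.clos NS.pi_false a v hv
      exact ⟨t, (RT.clos h ha).trans ht⟩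
theorem wnS : ∀ u : NSub, ∃ v, NS false v ∧ RS u v
  | .id => ⟨_, .id, .refl⟩
  | .pi => ⟨_, .pi 0, .refl⟩
  | .cons u V => by
      obtain ⟨a, ha⟩ := wnT V
      obtain ⟨v, hv, h⟩ := wnS u
      exact ⟨_, .cons (t := a) hv (by simp), RS.cons h ha⟩
  | .comp u v => by
      obtain ⟨u', hu, h⟩ := wnS u
      obtain ⟨v', hv, h'⟩ := wnS v
      obtain ⟨w, hw, h2⟩ := NS.comp hu (fun t _ => by
        obtain ⟨t', ht⟩ := NS.clos NS.pi_false t u' hu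
        exact ⟨t', ht, by simp⟩) hv
      exact ⟨w, hw, (RS.comp h h').trans h2⟩
end

theorem RT_emb (U : NTm) : RT U (emb (semT U)) := by
  obtain ⟨t, ht⟩ := wnT U
  have := sem_RT ht
  rw [semT_emb] at this
  rwa [this]

theorem nf_eq {U U' : NTm} (h : RT U U') (hn : ∀ W, ¬ NStepTm false U' W) :
    U' = emb (semT U) := by
  rw [sem_RT h]
  rcases Relation.ReflTransGen.cases_head (RT_emb U') with h | ⟨W, hW, _⟩
  · exact h
  · exact absurd hW (hn W)

mutual
theorem NStepTm.mono : ∀ {b U V}, NStepTm b U V → NStepTm true U V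
  | _, _, _, .beta => .beta
  | _, _, _, .abs => .abs
  | _, _, _, .app => .app
  | _, _, _, .consVar => .consVar
  | _, _, _, .idVar => .idVar
  | _, _, _, .clos => .clos
  | _, _, _, .lamCong h => .lamCong h.mono
  | _, _, _, .appL h => .appL h.mono
  | _, _, _, .appR h => .appR h.mono
  | _, _, _, .closL h => .closL h.mono
  | _, _, _, .closR h => .closR h.mono
theorem NStepSub.mono : ∀ {b u v}, NStepSub b u v → NStepSub true u v
  | _, _, _, .ass => .ass
  | _, _, _, .idR => .idR
  | _, _, _, .idShift => .idShift
  | _, _, _, .consShift => .consShift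
  | _, _, _, .map => .map
  | _, _, _, .consL h => .consL h.mono
  | _, _, _, .consR h => .consR h.mono
  | _, _, _, .compL h => .compL h.mono
  | _, _, _, .compR h => .compR h.mono
end

theorem emb_beta {t t'} (h : La.Beta t t') :
    Relation.ReflTransGen (NStepTm true) (emb t) (emb t') := by
  induction h with
  | beta t u =>
    refine Relation.ReflTransGen.head NStepTm.beta ?_
    have h := RT_emb (.clos (.cons .id (emb u)) (emb t))
    simp only [semT, semS, semT_emb] at h
    exact liftR (q := NStepTm true) (fun x => x) (fun _ _ h => NStepTm.mono h) h
  | lam _ ih => exact liftR NTm.lam (fun _ _ => NStepTm.lamCong) ih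
  | appL _ ih => exact liftR (fun x => NTm.app x _) (fun _ _ => NStepTm.appL) ih
  | appR _ ih => exact liftR (fun x => NTm.app _ x) (fun _ _ => NStepTm.appR) ih

theorem emb_betas {t t'} (h : Betas t t') :
    Relation.ReflTransGen (NStepTm true) (emb t) (emb t') := by
  induction h with
  | refl => exact .refl
  | tail _ h ih => exact ih.trans (emb_beta h)

/-! ### Named side -/

theorem tr_var {Γ M U} (h : TrTm Γ M U) : ∀ a, M = .var a → ∃ n, U = dbr n ∧ n = Γ.idxOf a := by
  refine TrTm.rec (motive_1 := fun Γ M U _ => ∀ a, M = .var a → ∃ n, U = dbr n ∧ n = Γ.idxOf a)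
    (motive_2 := fun _ _ _ _ _ => True) ?_ ?_ ?_ ?_ ?_ ?_ ?_ ?_ ?_ h
  · intro Γ a b e
    cases e
    exact ⟨0, rfl, by simp⟩
  · intro Γ a n b hab _ ih c e
    cases e
    obtain ⟨m, hm, e⟩ := ih a rfl
    have h2 := congrArg semT hm
    rw [semT_dbr, semT_dbr] at h2
    cases h2
    refine ⟨n + 1, rfl, ?_⟩
    rw [List.idxOf_cons_ne _ (Ne.symm hab), e]
  all_goals intros; trivial

theorem tr_var_eq {Γ a U V} (h : TrTm Γ (.var a) U) (h' : TrTm Γ (.var a) V) : U = V := by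
  obtain ⟨n, rfl, rfl⟩ := tr_var h a rfl
  obtain ⟨m, rfl, rfl⟩ := tr_var h' a rfl
  rfl

theorem tr_var_weak {Γ a b U} (h : TrTm Γ (.var a) U) (hab : a ≠ b) :
    ∃ n, U = dbr n ∧ TrTm (b :: Γ) (.var a) (dbr (n + 1)) := by
  obtain ⟨n, rfl, _⟩ := tr_var h a rfl
  exact ⟨n, rfl, .weak b hab h⟩

theorem tr_var_cons {Γ a b U} (h : TrTm (b :: Γ) (.var a) U) (hab : a ≠ b) :
    ∃ n, U = dbr (n + 1) ∧ TrTm Γ (.var a) (dbr n) := by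
  cases h with
  | var => exact absurd rfl hab
  | weak _ _ h => exact ⟨_, rfl, h⟩

mutual
theorem trT_fun : ∀ {M Γ U V}, TrTm Γ M U → TrTm Γ M V → U = V
  | .var a, _, _, _, h, h' => tr_var_eq h h'
  | .app M N, _, _, _, .app h1 h2, .app h1' h2' => by
      rw [trT_fun h1 h1', trT_fun h2 h2']
  | .lam a M, _, _, _, .lam h, .lam h' => by rw [trT_fun h h']
  | .clos s M, _, _, _, .clos h1 h2, .clos h1' h2' => by
      obtain ⟨rfl, rfl⟩ := trS_fun h1 h1'
      rw [trT_fun h2 h2']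
theorem trS_fun : ∀ {s Γ Δ Δ' u v}, TrSub Γ s Δ u → TrSub Γ s Δ' v → Δ = Δ' ∧ u = v
  | .id, _, _, _, _, _, .id _, .id _ => ⟨rfl, rfl⟩
  | .pi a, _, _, _, _, _, .pi _ _, .pi _ _ => ⟨rfl, rfl⟩
  | .cons s N a, _, _, _, _, _, .cons _ h1 h2, .cons _ h1' h2' => by
      obtain ⟨rfl, rfl⟩ := trS_fun h1 h1'
      exact ⟨rfl, by rw [trT_fun h2 h2']⟩
  | .comp s q, _, _, _, _, _, .comp h1 h2, .comp h1' h2' => by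
      obtain ⟨rfl, rfl⟩ := trS_fun h1 h1'
      exact trS_fun h2 h2'  |>.imp_right (fun h => by rw [h])
end

theorem sem_alpha : semS (.cons .pi .one) = fun n => .var n := by
  funext n; cases n <;> rfl

theorem betas_of_eq {s t : La} (h : s = t) : Betas s t := h ▸ .refl

theorem trVar0 (a Γ) : TrTm (a :: Γ) (.var a) .one := .var Γ a

mutual
theorem projT : ∀ {b M N}, StepTm b M N → ∀ {Γ U}, TrTm Γ M U →
    ∃ V, TrTm Γ N V ∧ Betas (semT U) (semT V)
  | _, _, _, .beta, _, _, .app (.lam hM) hN =>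
      ⟨_, .clos (.cons _ (.id _) hN) hM, .single (by
        simp only [semT, semS]; exact La.Beta.beta _ _)⟩
  | _, _, _, .abs, _, _, .clos hs (.lam hM) =>
      ⟨_, .lam (.clos (.cons _ (.comp (.pi _ _) hs) (trVar0 _ _)) hM), betas_of_eq (by
        simp only [semT, La.sub, semS_up])⟩
  | _, _, _, .app, _, _, .clos hs (.app h1 h2) =>
      ⟨_, .app (.clos hs h1) (.clos hs h2), betas_of_eq (by simp only [semT, La.sub])⟩
  | _, _, _, .consVar, Γ, _, .clos (.cons _ hs hN) h => by
      refine ⟨_, hN, betas_of_eq ?_⟩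
      rw [tr_var_eq h (trVar0 _ _)]
      rfl
  | _, _, _, .new hab, Γ, _, .clos (.cons _ hs hN) h => by
      obtain ⟨n, rfl, h'⟩ := tr_var_cons h hab.symm
      refine ⟨_, .clos hs h', betas_of_eq ?_⟩
      simp only [semT, semT_dbr]
      rfl
  | _, _, _, .idVar, Γ, _, .clos (.id _) h =>
      ⟨_, h, betas_of_eq (by simp only [semT, semS, La.sub_var])⟩
  | _, _, _, .clos, Γ, _, .clos hs (.clos hq hM) =>
      ⟨_, .clos (.comp hs hq) hM, betas_of_eq (by simp only [semT, semS, La.sub_sub])⟩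
  | _, _, _, .pi1 hab, _, _, .clos (.pi _ _) h => by
      obtain ⟨n, rfl, h'⟩ := tr_var_weak h hab.symm
      exact ⟨_, h', betas_of_eq (by simp only [semT, semT_dbr]; rfl)⟩
  | _, _, _, .pi2 hab, Γ, _, .clos (.comp hs (.pi _ _)) h => by
      obtain ⟨n, rfl, h'⟩ := tr_var_weak h hab.symm
      exact ⟨_, .clos hs h', betas_of_eq (by simp only [semT, semT_dbr]; rfl)⟩
  | _, _, _, .alpha1 _ _, Γ, _, .lam h =>
      ⟨_, .lam (.clos (.cons _ (.pi _ _) (trVar0 _ _)) h), betas_of_eq (by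
        simp only [semT, sem_alpha, La.sub_var])⟩
  | _, _, _, .lamCong h, _, _, .lam hM => by
      obtain ⟨V, hV, hb⟩ := projT h hM
      exact ⟨_, .lam hV, hb.lam⟩
  | _, _, _, .appL h, _, _, .app hM hN => by
      obtain ⟨V, hV, hb⟩ := projT h hM
      exact ⟨_, .app hV hN, hb.app .refl⟩
  | _, _, _, .appR h, _, _, .app hM hN => by
      obtain ⟨V, hV, hb⟩ := projT h hN
      exact ⟨_, .app hM hV, La.Betas.app .refl hb⟩
  | _, _, _, .closL h, _, _, .clos hs hM => by
      obtain ⟨V, hV, hb⟩ := projS h hs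
      exact ⟨_, .clos hV hM, La.Betas.sub' _ hb⟩
  | _, _, _, .closR h, _, _, .clos hs hM => by
      obtain ⟨V, hV, hb⟩ := projT h hM
      exact ⟨_, .clos hs hV, hb.sub _⟩
theorem projS : ∀ {b s q}, StepSub b s q → ∀ {Γ Δ u}, TrSub Γ s Δ u →
    ∃ v, TrSub Γ q Δ v ∧ ∀ n, Betas (semS u n) (semS v n)
  | _, _, _, .ass, _, _, _, .comp h1 (.comp h2 h3) =>
      ⟨_, .comp (.comp h1 h2) h3, fun n => betas_of_eq (by simp only [semS, La.sub_sub])⟩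
  | _, _, _, .idR, _, _, _, .comp h (.id _) =>
      ⟨_, h, fun n => betas_of_eq (by simp only [semS, La.sub])⟩
  | _, _, _, .idShift, _, _, _, .comp h1 h2 => by
      cases h1
      cases h2
      exact ⟨_, .pi _ _, fun n => betas_of_eq (by simp only [semS, La.sub])⟩
  | _, _, _, .consShift, _, _, _, .comp (.cons _ h _) (.pi _ _) =>
      ⟨_, h, fun n => betas_of_eq (by simp only [semS, La.sub, La.cons])⟩
  | _, _, _, .map, _, _, _, .comp h (.cons _ h1 h2) =>
      ⟨_, .cons _ (.comp h h1) (.clos h h2), fun n => betas_of_eq (by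
        cases n <;> simp only [semS, La.cons, semT])⟩
  | _, _, _, .consL h, _, _, _, .cons _ h1 h2 => by
      obtain ⟨v, hv, hb⟩ := projS h h1
      exact ⟨_, .cons _ hv h2, fun n => by
        cases n with
        | zero => exact .refl
        | succ n => exact hb n⟩
  | _, _, _, .consR h, _, _, _, .cons _ h1 h2 => by
      obtain ⟨v, hv, hb⟩ := projT h h2
      exact ⟨_, .cons _ h1 hv, fun n => by
        cases n with
        | zero => exact hb
        | succ n => exact .refl⟩
  | _, _, _, .compL h, _, _, _, .comp h1 h2 => by
      obtain ⟨v, hv, hb⟩ := projS h h1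
      exact ⟨_, .comp hv h2, fun n => La.Betas.sub' _ hb⟩
  | _, _, _, .compR h, _, _, _, .comp h1 h2 => by
      obtain ⟨v, hv, hb⟩ := projS h h2
      exact ⟨_, .comp h1 hv, fun n => (hb n).sub _⟩
end

theorem tr_uparrow (Γ : List ℕ) (a b : ℕ) (Δ : List ℕ) :
    ∃ u, TrSub (Δ ++ b :: Γ) (Uparrow Δ (.cons (.pi b) (.var b) a)) (Δ ++ a :: Γ) u ∧
      semS u = fun n => .var n := by
  induction Δ with
  | nil => exact ⟨_, .cons _ (.pi _ _) (trVar0 _ _), sem_alpha⟩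
  | cons c Δ ih =>
    obtain ⟨u, hu, h⟩ := ih
    exact ⟨_, .cons _ (.comp (.pi _ _) hu) (trVar0 _ _), by rw [semS_up, h, La.up_var]⟩

theorem projJ {b J K} (h : StepJ b J K) {U} (hU : TrTm J.1 J.2 U) :
    ∃ V, TrTm K.1 K.2 V ∧ Betas (semT U) (semT V) := by
  cases h with
  | step h => exact projT h hU
  | @alpha2 Γ Δ a b M _ _ =>
    obtain ⟨u, hu, h⟩ := tr_uparrow Γ a b Δ
    exact ⟨_, .clos hu hU, betas_of_eq (by simp only [semT, h, La.sub_var])⟩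

theorem projJs {b J K} (h : Relation.ReflTransGen (StepJ b) J K) {U} (hU : TrTm J.1 J.2 U) :
    ∃ V, TrTm K.1 K.2 V ∧ Betas (semT U) (semT V) := by
  induction h with
  | refl => exact ⟨U, hU, .refl⟩
  | tail _ h ih =>
    obtain ⟨V, hV, hb⟩ := ih
    obtain ⟨W, hW, hb'⟩ := projJ h hV
    exact ⟨W, hW, hb.trans hb'⟩

/-- projection of λπ-reductions to λσ: the σ-normal forms of the
translations are related by λσ-reduction. -/
theorem lpi_projects_to_lsigma {Γ Θ : List ℕ} {M L : Tm} {U V : NTm}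
    (hred : Relation.ReflTransGen (StepJ true) (Γ, M) (Θ, L))
    (hU : TrTm Γ M U) (hV : TrTm Θ L V) :
    ∀ U' V' : NTm,
      Relation.ReflTransGen (NStepTm false) U U' → (∀ W : NTm, ¬ NStepTm false U' W) →
      Relation.ReflTransGen (NStepTm false) V V' → (∀ W : NTm, ¬ NStepTm false V' W) →
      Relation.ReflTransGen (NStepTm true) U' V' := by
  intro U' V' h1 n1 h2 n2
  obtain ⟨W, hW, hb⟩ := projJs hred hU
  cases trT_fun hW hV
  rw [nf_eq h1 n1, nf_eq h2 n2]
  exact emb_betas hb
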